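/- arXiv:0811.0186 — 2 statements merged into one kernel-verified Lean document; each statement's English description precedes it below -/
import Mathlib

section
/- Let G = (V,E) be a finite multigraph with an arbitrary orientation of its edges, incidence matrix ε (with ε_{ev} = 0 for self-loops), edge variables α_e, vertex weights q_v, and flag momenta p_f ∈ ℝ^d with p_v the total flag momentum at v. Let H be the V×V matrix H_{v,v'} = Σ_{e∈E} (1/α_e) ε_{ev} ε_{ev'} + q_v δ_{v,v'}. Then the generalized second Symanzik polynomial satisfies 𝒱_G(α,q,p) = (Π_{e∈E} α_e) · Σ_{v,v'∈V} (adj H)_{v,v'} p_v·p_{v'}, where adj H is the adjugate matrix of H. -/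
/-!
The adjugate form is, coordinate by coordinate in `ℝ^d`, the difference between two determinants:
by the matrix determinant lemma `det (H + u uᵀ) = det H + uᵀ adj(H) u`
(`det_add_vecMulVec_adjugate`). Both determinants have the shape `det (B + Σ x_e ε_e ε_eᵀ)` with
`x_e = 1 / α_e` and `B = diag q + u uᵀ` or `B = diag q`, and for an arbitrary matrix `B`

  `det (B + Σ_e x_e ε_e ε_eᵀ) = Σ_{F forest} Π_{e ∈ F} x_e · det (B / F)`,

where `B / F` is indexed by the components of `F` and has entries `B` summed over pairs of components
(`Multigraph.det_add_laplacian`). For the two choices of `B`, the quotients are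
`diag q_C + u_C u_Cᵀ` and `diag q_C`, whose determinants differ by `Σ_C u_C² Π_{C' ≠ C} q_{C'}`.
Multiplying by `Π α_e` turns `Π_{e ∈ F} 1 / α_e` into `Π_{e ∉ F} α_e`.

The expansion is proved by induction on the edge set. Adding a non-loop edge `e` changes the
determinant by `x_e` times the determinant of the matrix with the endpoints of `e` merged
(`det_add_edge`); this term is the expansion for the contraction by `e`, and forests of the
contraction correspond to forests containing `e` (`Multigraph.isForest_mapV`).
-/

open Finset

attribute [local instance] Classical.propDecidable

/-- A finite multigraph: vertex type `V`, edge type `E`, each edge carrying an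
ordered pair of (possibly equal) endpoints (the order is an arbitrary orientation). -/
structure Multigraph (V E : Type) where
  ends : E → V × V

namespace Multigraph

variable {V E Fl : Type} {d : ℕ}

/-- `v` and `w` are joined by an edge of `A`. -/
def edgeRel (G : Multigraph V E) (A : Finset E) (v w : V) : Prop :=
  ∃ e ∈ A, G.ends e = (v, w) ∨ G.ends e = (w, v)

/-- The partition of `V` into connected components of the spanning subgraph `(V, A)`. -/
def compSetoid (G : Multigraph V E) (A : Finset E) : Setoid V :=
  Relation.EqvGen.setoid (G.edgeRel A)

/-- `v` and `w` lie in the same connected component of the spanning subgraph `(V, A)`. -/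
def Reach (G : Multigraph V E) (A : Finset E) (v w : V) : Prop :=
  Relation.EqvGen (G.edgeRel A) v w

/-- `k A`: the number of connected components of the spanning subgraph `(V, A)`. -/
noncomputable def k (G : Multigraph V E) (A : Finset E) : ℕ :=
  Nat.card (Quotient (G.compSetoid A))

/-- The rank `r(A) = |V| - k(A)` of the spanning subgraph `(V, A)`. -/
noncomputable def rank (G : Multigraph V E) (A : Finset E) : ℕ :=
  Nat.card V - G.k A

/-- The nullity `n(A) = |A| + k(A) - |V|` of the spanning subgraph `(V, A)`. -/
noncomputable def nullity (G : Multigraph V E) (A : Finset E) : ℕ :=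
  A.card + G.k A - Nat.card V

/-- A self-loop: both endpoints coincide. -/
def IsLoop (G : Multigraph V E) (e : E) : Prop :=
  (G.ends e).1 = (G.ends e).2

/-- A bridge: deleting the edge increases the number of connected components. -/
def IsBridge (G : Multigraph V E) [Fintype E] (e : E) : Prop :=
  G.k (Finset.univ.erase e) ≠ G.k Finset.univ

/-- The Tutte polynomial, via the subset (rank–nullity) expansion. -/
noncomputable def tutte (G : Multigraph V E) [Fintype E] (x y : ℝ) : ℝ :=
  ∑ A : Finset E,
    (x - 1) ^ (G.rank Finset.univ - G.rank A) * (y - 1) ^ G.nullity A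

/-- Deletion of the edge `e`. -/
def delete (G : Multigraph V E) (e : E) : Multigraph V {e' : E // e' ≠ e} :=
  ⟨fun e' => G.ends e'⟩

/-- The setoid identifying the two endpoints of `e`. -/
def contrSetoid (G : Multigraph V E) (e : E) : Setoid V :=
  Relation.EqvGen.setoid (fun v w => G.ends e = (v, w))

/-- Contraction of the edge `e`: its endpoints are identified and `e` is removed.
(For a self-loop this yields a graph isomorphic to the deletion `G - e`,
in accordance with the convention `G/e = G - e` for self-loops.) -/
def contract (G : Multigraph V E) (e : E) :
    Multigraph (Quotient (G.contrSetoid e)) {e' : E // e' ≠ e} :=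
  ⟨fun e' => (Quotient.mk _ (G.ends e'.1).1, Quotient.mk _ (G.ends e'.1).2)⟩

/-- The multivariate Tutte polynomial `Z_G(q, β)`. -/
noncomputable def multiTutte (G : Multigraph V E) [Fintype E] (q : ℝ) (β : E → ℝ) : ℝ :=
  ∑ A : Finset E, q ^ G.k A * ∏ e ∈ A, β e

/-- `(V, A)` is acyclic (a forest): every edge of `A` is a bridge of `(V, A)`. -/
def IsForest (G : Multigraph V E) [DecidableEq E] (A : Finset E) : Prop :=
  ∀ e ∈ A, G.k (A.erase e) ≠ G.k A

/-- First Symanzik polynomial: sum over spanning trees `T` of `∏_{e ∉ T} α_e`. -/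
noncomputable def treePoly (G : Multigraph V E) [Fintype E] [DecidableEq E] (α : E → ℝ) : ℝ :=
  ∑ A ∈ Finset.univ.filter (fun A => G.IsForest A ∧ G.k A = 1),
    ∏ e ∈ Finset.univ \ A, α e

/-- The total weight `q_C` of the component `c` of the spanning subgraph `(V, A)`. -/
noncomputable def qComp (G : Multigraph V E) [Fintype V] (A : Finset E) (q : V → ℝ)
    (c : Quotient (G.compSetoid A)) : ℝ :=
  ∑ v ∈ Finset.univ.filter (fun v => Quotient.mk (G.compSetoid A) v = c), q v

/-- Generalized first Symanzik polynomial `𝒰_G(α, q)`. -/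
noncomputable def genU (G : Multigraph V E) [Fintype V] [Fintype E] [DecidableEq E]
    (α : E → ℝ) (q : V → ℝ) : ℝ :=
  ∑ A ∈ Finset.univ.filter (fun A => G.IsForest A),
    (∏ e ∈ Finset.univ \ A, α e) * ∏ c : Quotient (G.compSetoid A), G.qComp A q c

end Multigraph

/-- Euclidean dot product on `ℝ^d`. -/
def dotp {d : ℕ} (x y : Fin d → ℝ) : ℝ := ∑ i, x i * y i

/-- Total flag momentum `p_v` at the vertex `v`. -/
noncomputable def flagP {V Fl : Type} {d : ℕ} [Fintype Fl] (attach : Fl → V)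
    (p : Fl → Fin d → ℝ) (v : V) : Fin d → ℝ :=
  ∑ f ∈ Finset.univ.filter (fun f => attach f = v), p f

namespace Multigraph

/-- Total momentum `p_C` of the component `c` of the spanning subgraph `(V, A)`. -/
noncomputable def pComp (G : Multigraph V E) [Fintype Fl] (A : Finset E) (attach : Fl → V)
    (p : Fl → Fin d → ℝ) (c : Quotient (G.compSetoid A)) : Fin d → ℝ :=
  ∑ f ∈ Finset.univ.filter (fun f => Quotient.mk (G.compSetoid A) (attach f) = c), p f

/-- Generalized second Symanzik polynomial `𝒱_G(α, q, p)`. -/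
noncomputable def genV (G : Multigraph V E) [Fintype V] [Fintype E] [DecidableEq E] [Fintype Fl]
    (α : E → ℝ) (q : V → ℝ) (attach : Fl → V) (p : Fl → Fin d → ℝ) : ℝ :=
  ∑ A ∈ Finset.univ.filter (fun A => G.IsForest A),
    (∏ e ∈ Finset.univ \ A, α e) *
      ∑ c : Quotient (G.compSetoid A),
        dotp (G.pComp A attach p c) (G.pComp A attach p c) *
          ∏ c' ∈ Finset.univ.erase c, G.qComp A q c'

/-- Adding one new edge joining `v` and `v'`. -/
def addEdge (G : Multigraph V E) (v v' : V) : Multigraph V (Option E) :=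
  ⟨fun e => e.elim (v, v') G.ends⟩

/-- Signed incidence matrix `ε_{ev}` (vanishing on self-loops). -/
noncomputable def eps (G : Multigraph V E) (e : E) (v : V) : ℝ :=
  (if (G.ends e).1 = v then 1 else 0) - (if (G.ends e).2 = v then 1 else 0)

end Multigraph


namespace Multigraph
/-- The discrete Schrödinger operator `H = Δ + V` on the vertices:
`H_{v,v'} = Σ_e (1/α_e) ε_{ev} ε_{ev'} + q_v δ_{v,v'}`. -/
noncomputable def HMat (G : Multigraph V E) [Fintype E] (α : E → ℝ) (q : V → ℝ) :
    Matrix V V ℝ :=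
  Matrix.of fun v v' =>
    (∑ e : E, (1 / α e) * G.eps e v * G.eps e v') + (if v = v' then q v else 0)
end Multigraph

/-! ### Connectivity, forests and contraction -/

namespace Multigraph

variable {V W E Fl : Type}

theorem Reach.mono {G : Multigraph V E} {A B : Finset E} (h : A ⊆ B) {v w : V}
    (hr : G.Reach A v w) : G.Reach B v w := by
  refine Relation.EqvGen.mono (p := G.edgeRel B) ?_ _ _ hr
  rintro x y ⟨e, he, h'⟩
  exact ⟨e, h he, h'⟩

theorem reach_of_mem (G : Multigraph V E) {A : Finset E} {e : E} (he : e ∈ A) :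
    G.Reach A (G.ends e).1 (G.ends e).2 :=
  Relation.EqvGen.rel _ _ ⟨e, he, Or.inl rfl⟩

/-- A path using the new edge `f` can be shortened to use it at most once. -/
theorem Reach.of_insert [DecidableEq E] {G : Multigraph V E} {A : Finset E} {f : E} {x y : V}
    (h : G.Reach (insert f A) x y) :
    G.Reach A x y ∨ (G.Reach A x (G.ends f).1 ∧ G.Reach A (G.ends f).2 y) ∨
      (G.Reach A x (G.ends f).2 ∧ G.Reach A (G.ends f).1 y) := by
  have R : ∀ a, G.Reach A a a := fun a => Relation.EqvGen.refl a
  have S : ∀ {a b}, G.Reach A a b → G.Reach A b a := fun h => Relation.EqvGen.symm _ _ h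
  have T : ∀ {a b c}, G.Reach A a b → G.Reach A b c → G.Reach A a c :=
    fun h h' => Relation.EqvGen.trans _ _ _ h h'
  induction h with
  | rel x y h =>
    obtain ⟨e, he, h⟩ := h
    rcases Finset.mem_insert.1 he with rfl | he
    · rcases h with h | h
      · rw [h]; exact Or.inr (Or.inl ⟨R _, R _⟩)
      · rw [h]; exact Or.inr (Or.inr ⟨R _, R _⟩)
    · exact Or.inl (Relation.EqvGen.rel _ _ ⟨e, he, h⟩)
  | refl x => exact Or.inl (R _)
  | symm x y _ ih =>
    rcases ih with h | ⟨h, h'⟩ | ⟨h, h'⟩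
    · exact Or.inl (S h)
    · exact Or.inr (Or.inr ⟨S h', S h⟩)
    · exact Or.inr (Or.inl ⟨S h', S h⟩)
  | trans x y z _ _ ih ih' =>
    rcases ih with h | ⟨h, h'⟩ | ⟨h, h'⟩ <;> rcases ih' with k | ⟨k, k'⟩ | ⟨k, k'⟩
    · exact Or.inl (T h k)
    · exact Or.inr (Or.inl ⟨T h k, k'⟩)
    · exact Or.inr (Or.inr ⟨T h k, k'⟩)
    · exact Or.inr (Or.inl ⟨h, T h' k⟩)
    · exact Or.inr (Or.inl ⟨h, k'⟩)
    · exact Or.inl (T h k')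
    · exact Or.inr (Or.inr ⟨h, T h' k⟩)
    · exact Or.inl (T h k')
    · exact Or.inr (Or.inr ⟨h, k'⟩)

/-- The component-counting definition of a forest, restated: no edge has its endpoints joined by
the remaining edges. Finiteness of `V` turns a proper coarsening of the partition into a strict
drop in the number of components. -/
theorem isForest_iff [Finite V] [DecidableEq E] (G : Multigraph V E) (A : Finset E) :
    G.IsForest A ↔ ∀ e ∈ A, ¬ G.Reach (A.erase e) (G.ends e).1 (G.ends e).2 := by
  refine forall₂_congr fun e he => not_congr ?_
  have hle : ∀ {v w}, G.Reach (A.erase e) v w → G.Reach A v w :=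
    Reach.mono (Finset.erase_subset _ _)
  constructor
  · intro hk
    let φ : Quotient (G.compSetoid (A.erase e)) → Quotient (G.compSetoid A) :=
      Quotient.map id fun v w h => hle h
    have hφ : Function.Surjective φ := by
      rintro ⟨v⟩; exact ⟨Quotient.mk _ v, rfl⟩
    have hb : Function.Bijective φ :=
      (Nat.bijective_iff_surjective_and_card φ).2 ⟨hφ, hk⟩
    have : Quotient.mk (G.compSetoid (A.erase e)) (G.ends e).1
        = Quotient.mk (G.compSetoid (A.erase e)) (G.ends e).2 :=
      hb.1 (Quotient.sound (s := G.compSetoid A) (G.reach_of_mem he))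
    exact Quotient.exact this
  · intro hr
    have : G.compSetoid (A.erase e) = G.compSetoid A := by
      ext v w
      refine ⟨fun h => hle h, fun h => ?_⟩
      have h' : G.Reach (insert e (A.erase e)) v w := by rwa [Finset.insert_erase he]
      have T : ∀ {a b c}, G.Reach (A.erase e) a b → G.Reach (A.erase e) b c →
          G.Reach (A.erase e) a c := fun h h' => Relation.EqvGen.trans _ _ _ h h'
      rcases h'.of_insert with h | ⟨h, h'⟩ | ⟨h, h'⟩
      · exact h
      · exact T (T h hr) h'
      · exact T (T h (Relation.EqvGen.symm _ _ hr)) h'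
    unfold k
    rw [this]

/-- The multigraph on `W` obtained by pushing all endpoints forward along `π : V → W`; no edge is
discarded, so an edge whose endpoints are identified becomes a self-loop. -/
def mapV (G : Multigraph V E) (π : V → W) : Multigraph W E :=
  ⟨fun e => (π (G.ends e).1, π (G.ends e).2)⟩

/-- If `π` identifies exactly the endpoints of `e`, components of `F` in the contracted graph are
components of `F ∪ {e}` in the original one. -/
theorem reach_mapV [DecidableEq E] (G : Multigraph V E) {π : V → W} (hπ : π.Surjective) {e : E}
    (he : π (G.ends e).1 = π (G.ends e).2)
    (hker : ∀ v w, π v = π w → G.Reach {e} v w) (F : Finset E) (v w : V) :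
    (G.mapV π).Reach F (π v) (π w) ↔ G.Reach (insert e F) v w := by
  have hK : ∀ v w, π v = π w → G.Reach (insert e F) v w := fun v w h =>
    (hker v w h).mono (by simp)
  constructor
  · intro h
    have key : ∀ x y, (G.mapV π).Reach F x y → ∀ v w, π v = x → π w = y →
        G.Reach (insert e F) v w := by
      intro x y h
      induction h with
      | rel x y h =>
        obtain ⟨f, hf, h⟩ := h
        intro v w hv hw
        have hr := G.reach_of_mem (A := insert e F) (Finset.mem_insert_of_mem hf)
        rcases h with h | h
        · have h1 : π (G.ends f).1 = x := congrArg Prod.fst h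
          have h2 : π (G.ends f).2 = y := congrArg Prod.snd h
          exact (hK _ _ (hv.trans h1.symm)).trans _ _ _ (hr.trans _ _ _ (hK _ _ (h2.trans hw.symm)))
        · have h1 : π (G.ends f).1 = y := congrArg Prod.fst h
          have h2 : π (G.ends f).2 = x := congrArg Prod.snd h
          exact (hK _ _ (hv.trans h2.symm)).trans _ _ _
            ((hr.symm).trans _ _ _ (hK _ _ (h1.trans hw.symm)))
      | refl x => intro v w hv hw; exact hK _ _ (hv.trans hw.symm)
      | symm x y _ ih => intro v w hv hw; exact (ih w v hw hv).symm
      | trans x y z _ _ ih ih' =>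
        intro v w hv hw
        obtain ⟨u, hu⟩ := hπ y
        exact (ih v u hv hu).trans _ _ _ (ih' u w hu hw)
    exact key _ _ h v w rfl rfl
  · intro h
    induction h with
    | rel x y h =>
      obtain ⟨f, hf, h⟩ := h
      rcases Finset.mem_insert.1 hf with rfl | hf
      · have : π x = π y := by
          rcases h with h | h <;> rw [h] at he
          · exact he
          · exact he.symm
        rw [this]; exact Relation.EqvGen.refl _
      · refine Relation.EqvGen.rel _ _ ⟨f, hf, ?_⟩
        rcases h with h | h
        · left; simp [mapV, h]
        · right; simp [mapV, h]
    | refl x => exact Relation.EqvGen.refl _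
    | symm x y _ ih => exact ih.symm
    | trans x y z _ _ ih ih' => exact ih.trans _ _ _ ih'

/-- For a non-loop `e`, the forests containing `e` are the forests of the contraction by `e`. -/
theorem isForest_mapV [Finite V] [Finite W] [DecidableEq E] (G : Multigraph V E) {π : V → W}
    (hπ : π.Surjective) {e : E} (he : π (G.ends e).1 = π (G.ends e).2)
    (hker : ∀ v w, π v = π w → G.Reach {e} v w) (hne : (G.ends e).1 ≠ (G.ends e).2)
    {F : Finset E} (heF : e ∉ F) :
    G.IsForest (insert e F) ↔ (G.mapV π).IsForest F := by
  have key : ∀ f ∈ F, G.Reach ((insert e F).erase f) (G.ends f).1 (G.ends f).2 ↔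
      (G.mapV π).Reach (F.erase f) ((G.mapV π).ends f).1 ((G.mapV π).ends f).2 := by
    intro f hf
    have hfe : e ≠ f := fun h => heF (h ▸ hf)
    rw [Finset.erase_insert_of_ne hfe]
    exact (G.reach_mapV hπ he hker _ _ _).symm
  rw [isForest_iff, isForest_iff]
  constructor
  · intro h f hf
    rw [← key f hf]
    exact h f (Finset.mem_insert_of_mem hf)
  · intro h f hf
    rcases Finset.mem_insert.1 hf with rfl | hf
    · rw [Finset.erase_insert heF]
      -- Grow the edge set: the first `g` joining the endpoints of `f` would, by exchange,
      -- have its own endpoints joined by `f` together with the earlier edges.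
      have main : ∀ A : Finset E, A ⊆ F → ¬ G.Reach A (G.ends f).1 (G.ends f).2 := by
        intro A
        induction A using Finset.induction_on with
        | empty =>
          intro _ hr
          have : ∀ x y, G.Reach ∅ x y → x = y := by
            intro x y hxy
            induction hxy with
            | rel x y h => obtain ⟨_, h, _⟩ := h; simp at h
            | refl => rfl
            | symm _ _ _ ih => exact ih.symm
            | trans _ _ _ _ _ ih ih' => exact ih.trans ih'
          exact hne (this _ _ hr)
        | insert g A hg ih =>
          intro hA hr
          have hgF : g ∈ F := hA (Finset.mem_insert_self _ _)
          have hAF : A ⊆ F := fun x hx => hA (Finset.mem_insert_of_mem hx)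
          refine h g hgF ((key g hgF).1 ?_)
          have hfg : f ≠ g := fun h => heF (h ▸ hgF)
          rw [Finset.erase_insert_of_ne hfg]
          have hsub : A ⊆ insert f (F.erase g) := fun x hx =>
            Finset.mem_insert_of_mem
              (Finset.mem_erase.2 ⟨fun h => hg (h ▸ hx), hAF hx⟩)
          have hf' := G.reach_of_mem (Finset.mem_insert_self f (F.erase g))
          rcases hr.of_insert with h | ⟨h, h'⟩ | ⟨h, h'⟩
          · exact absurd h (ih hAF)
          · exact ((h.mono hsub).symm.trans _ _ _ hf').trans _ _ _ (h'.mono hsub).symm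
          · exact ((h'.mono hsub).trans _ _ _ hf'.symm).trans _ _ _ (h.mono hsub)
      exact main F subset_rfl
    · rw [key f hf]
      exact h f hf

theorem not_isForest_insert_of_loop [Finite V] [DecidableEq E] (G : Multigraph V E) {e : E}
    (h : (G.ends e).1 = (G.ends e).2) (F : Finset E) : ¬ G.IsForest (insert e F) := by
  rw [isForest_iff]
  intro hF
  apply hF e (Finset.mem_insert_self _ _)
  rw [h]
  exact Relation.EqvGen.refl _

end Multigraph

/-! ### Matrices summed over the fibres of a map -/

open Matrix

section Fibre

variable {V W X : Type} [Fintype V] [DecidableEq W] [DecidableEq X]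

/-- The indicator matrix of the graph of `f : V → W`. -/
def fibMat (f : V → W) : Matrix V W ℝ := Matrix.of fun v w => if f v = w then 1 else 0

/-- The quotient matrix of `M` along `f`: the entry at `(w, w')` is the sum of the entries of `M`
over `f⁻¹ w × f⁻¹ w'`. -/
def pushMat (f : V → W) (M : Matrix V V ℝ) : Matrix W W ℝ := (fibMat f)ᵀ * M * fibMat f

theorem vecMul_fibMat_apply (f : V → W) (u : V → ℝ) (w : W) :
    (u ᵥ* fibMat f) w = ∑ v ∈ univ.filter (fun v => f v = w), u v := by
  simp [Matrix.vecMul, dotProduct, fibMat, Finset.sum_filter]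

theorem pushMat_pushMat [Fintype W] (f : V → W) (g : W → X) (M : Matrix V V ℝ) :
    pushMat g (pushMat f M) = pushMat (g ∘ f) M := by
  have : fibMat f * fibMat g = fibMat (g ∘ f) := by
    ext v x
    simp only [fibMat, Matrix.mul_apply, Matrix.of_apply, ite_mul, one_mul, zero_mul]
    simp
  simp only [pushMat, ← this, Matrix.transpose_mul, Matrix.mul_assoc]

theorem pushMat_vecMulVec (f : V → W) (u u' : V → ℝ) :
    pushMat f (vecMulVec u u') = vecMulVec (u ᵥ* fibMat f) (u' ᵥ* fibMat f) := by
  rw [pushMat, Matrix.mul_vecMulVec, Matrix.vecMulVec_mul, Matrix.mulVec_transpose]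

theorem pushMat_add (f : V → W) (M N : Matrix V V ℝ) :
    pushMat f (M + N) = pushMat f M + pushMat f N := by
  simp [pushMat, Matrix.mul_add, Matrix.add_mul]

theorem pushMat_smul (f : V → W) (c : ℝ) (M : Matrix V V ℝ) :
    pushMat f (c • M) = c • pushMat f M := by
  simp [pushMat]

theorem pushMat_sum {ι : Type} (f : V → W) (s : Finset ι) (M : ι → Matrix V V ℝ) :
    pushMat f (∑ i ∈ s, M i) = ∑ i ∈ s, pushMat f (M i) := by
  simp [pushMat, Matrix.mul_sum, Matrix.sum_mul]

theorem pushMat_diagonal [DecidableEq V] (f : V → W) (q : V → ℝ) :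
    pushMat f (diagonal q) = diagonal (q ᵥ* fibMat f) := by
  ext w w'
  rw [pushMat, Matrix.mul_apply]
  by_cases h : w = w'
  · subst h
    simp [Matrix.mul_diagonal, fibMat, Matrix.vecMul, dotProduct, ← ite_and]
  · rw [Matrix.diagonal_apply_ne _ h]
    refine Finset.sum_eq_zero fun v _ => ?_
    simp only [Matrix.mul_diagonal, fibMat, Matrix.transpose_apply, Matrix.of_apply]
    by_cases h1 : f v = w
    · have : f v ≠ w' := fun h2 => h (h1.symm.trans h2)
      simp [this]
    · simp [h1]

/-- The determinant of a quotient matrix depends only on the partition into fibres. -/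
theorem det_pushMat_congr [Fintype W] [Fintype X] {f : V → W} {g : V → X} (hf : f.Surjective) (hg : g.Surjective)
    (h : ∀ a b, f a = f b ↔ g a = g b) (M : Matrix V V ℝ) :
    (pushMat f M).det = (pushMat g M).det := by
  let e₀ : W → X := fun w => g (Function.surjInv hf w)
  have he : ∀ v, e₀ (f v) = g v := fun v => (h _ _).1 (Function.surjInv_eq hf (f v))
  have hb : Function.Bijective e₀ := by
    constructor
    · intro w w' hw
      obtain ⟨v, rfl⟩ := hf w
      obtain ⟨v', rfl⟩ := hf w'
      rw [he, he] at hw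
      exact (h _ _).2 hw
    · intro x
      obtain ⟨v, rfl⟩ := hg x
      exact ⟨f v, he v⟩
  have hfib : fibMat f = (fibMat g).submatrix id (Equiv.ofBijective e₀ hb) := by
    ext v w
    obtain ⟨v', rfl⟩ := hf w
    simp [fibMat, he, h]
  have : pushMat f M = (pushMat g M).submatrix (Equiv.ofBijective e₀ hb)
      (Equiv.ofBijective e₀ hb) := by
    rw [pushMat, hfib]
    ext w w'
    simp [pushMat, Matrix.mul_apply]
  rw [this, Matrix.det_submatrix_equiv_self]

end Fibre

/-! ### Rank-one updates of determinants -/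

/-- Matrix determinant lemma in adjugate form, with no invertibility hypothesis; it follows from
the invertible case by density of the invertible matrices in the line `t ↦ A + t`. -/
theorem det_add_vecMulVec_adjugate {n : Type} [Fintype n] [DecidableEq n] (A : Matrix n n ℝ)
    (u v : n → ℝ) : (A + vecMulVec u v).det = A.det + v ⬝ᵥ (A.adjugate *ᵥ u) := by
  have hinv : ∀ B : Matrix n n ℝ, B.det ≠ 0 →
      (B + vecMulVec u v).det = B.det + v ⬝ᵥ (B.adjugate *ᵥ u) := by
    intro B hB
    have h := Matrix.det_add_replicateCol_mul_replicateRow (ι := Unit)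
      (isUnit_iff_ne_zero.2 hB) u v
    rw [← Matrix.vecMulVec_eq] at h
    rw [h, Matrix.det_unique (n := Unit), Matrix.add_apply, Matrix.one_apply_eq, Matrix.mul_assoc,
      ← Matrix.replicateCol_mulVec, Matrix.replicateRow_mul_replicateCol_apply,
      Matrix.inv_def, Matrix.smul_mulVec, dotProduct_smul, Ring.inverse_eq_inv', smul_eq_mul]
    field_simp
  let B : ℝ → Matrix n n ℝ := fun t => Matrix.scalar n t - (-A)
  have hBc : Continuous B := by
    refine Continuous.sub ?_ continuous_const
    refine continuous_matrix fun i j => ?_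
    by_cases h : i = j
    · subst h; simpa using continuous_id'
    · simpa [h] using continuous_const
  have hd : Dense {t : ℝ | (B t).det ≠ 0} := by
    have hfin : Set.Finite {t : ℝ | (-A).charpoly.IsRoot t} :=
      Polynomial.finite_setOfPred_isRoot (Matrix.charpoly_monic _).ne_zero
    have h := hfin.countable.dense_compl ℝ
    convert h using 1
    ext t
    simp [Polynomial.IsRoot, Matrix.eval_charpoly, B]
  have heq := Continuous.ext_on hd
    (f := fun t => (B t + vecMulVec u v).det)
    (g := fun t => (B t).det + v ⬝ᵥ ((B t).adjugate *ᵥ u))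
    (hBc.add continuous_const).matrix_det
    (hBc.matrix_det.add
      (continuous_const.dotProduct (hBc.matrix_adjugate.matrix_mulVec continuous_const)))
    (fun t ht => hinv _ ht)
  have h0 := congrFun heq 0
  simpa [B] using h0

section Contract

variable {V : Type} [DecidableEq V]

/-- The map merging `b` into `a`. -/
def mergeMap {a b : V} (hab : a ≠ b) (v : V) : {v : V // v ≠ b} :=
  if h : v = b then ⟨a, hab⟩ else ⟨v, h⟩

theorem mergeMap_surjective {a b : V} (hab : a ≠ b) : (mergeMap hab).Surjective := by
  rintro ⟨v, hv⟩
  exact ⟨v, by simp [mergeMap, hv]⟩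

theorem mergeMap_ends {a b : V} (hab : a ≠ b) : mergeMap hab a = mergeMap hab b := by
  simp [mergeMap, hab]

theorem mergeMap_eq {a b : V} (hab : a ≠ b) {v w : V} (h : mergeMap hab v = mergeMap hab w) :
    v = w ∨ (v = a ∧ w = b) ∨ (v = b ∧ w = a) := by
  unfold mergeMap at h
  split_ifs at h with h1 h2 h2 <;> simp_all

/-- Updating by `x (δ_a - δ_b)(δ_a - δ_b)ᵀ` adds `x` times the determinant of the matrix in which
`a` and `b` are merged. -/
theorem det_add_edge [Fintype V] {a b : V} (hab : a ≠ b) (M : Matrix V V ℝ) (x : ℝ) :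
    (M + x • vecMulVec (Pi.single a 1 - Pi.single b 1) (Pi.single a 1 - Pi.single b 1)).det
      = M.det + x * (pushMat (mergeMap hab) M).det := by
  -- Adding row `b` to row `a`, and the same for columns, turns `δ_a - δ_b` into `-δ_b`.
  set U : Matrix V V ℝ := transvection a b 1 with hU
  have hdU : U.det = 1 := det_transvection_of_ne a b hab 1
  set N := U * M * Uᵀ with hN
  have hMN : M.det = N.det := by simp [hN, hdU]
  have hUe : U *ᵥ (Pi.single a 1 - Pi.single b 1) = -Pi.single b 1 := by
    rw [Matrix.mulVec_sub, Matrix.mulVec_single_one, Matrix.mulVec_single_one]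
    ext v
    simp only [hU, transvection, Matrix.col_apply, Pi.sub_apply, Pi.neg_apply, Matrix.add_apply,
      Matrix.one_apply, Matrix.single_apply, Pi.single_apply]
    have hba : b ≠ a := hab.symm
    by_cases h1 : v = a <;> by_cases h2 : v = b <;> simp_all [eq_comm]
  have h1 : (M + x • vecMulVec (Pi.single a 1 - Pi.single b 1)
      (Pi.single a 1 - Pi.single b 1)).det
      = (N + vecMulVec (x • Pi.single b 1) (Pi.single b 1)).det := by
    have : N + vecMulVec (x • Pi.single b 1) (Pi.single b 1)
        = U * (M + x • vecMulVec (Pi.single a 1 - Pi.single b 1)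
      (Pi.single a 1 - Pi.single b 1)) * Uᵀ := by
      rw [Matrix.mul_add, Matrix.add_mul, Matrix.mul_smul, Matrix.smul_mul, Matrix.mul_vecMulVec,
        Matrix.vecMulVec_mul, Matrix.vecMul_transpose, hUe]
      simp [Matrix.smul_vecMulVec, hN]
    rw [this]; simp [hdU]
  rw [h1, det_add_vecMulVec_adjugate, hMN, Matrix.mulVec_smul, dotProduct_smul, smul_eq_mul]
  congr 2
  rw [Matrix.mulVec_single_one, single_one_dotProduct, Matrix.col_apply, Matrix.adjugate_apply,
    Matrix.twoBlockTriangular_det _ (fun v => v ≠ b)]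
  · have h2 : ∀ A : Matrix V V ℝ, (toSquareBlockProp A fun i => ¬ i ≠ b).det = A b b := by
      intro A
      let u : Unique {i // ¬ i ≠ b} := ⟨⟨⟨b, by simp⟩⟩, fun ⟨y, hy⟩ => by simpa using hy⟩
      exact Matrix.det_unique (toSquareBlockProp A fun i => ¬ i ≠ b)
    rw [h2, Matrix.updateRow_self, Pi.single_eq_same, mul_one]
    congr 1
    have h3 : ∀ (v : V) (w : {v : V // v ≠ b}), fibMat (mergeMap hab) v w = U w v := by
      rintro v ⟨w, hw⟩
      simp only [fibMat, mergeMap, hU, transvection, Matrix.of_apply, Matrix.add_apply,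
        Matrix.one_apply, Matrix.single_apply]
      by_cases h : v = b
      · subst h; simp [hw]
      · have h' : b ≠ v := fun h' => h h'.symm
        simp [h, h', eq_comm]
    ext ⟨w, hw⟩ ⟨w', hw'⟩
    simp only [toSquareBlockProp_def, Matrix.of_apply, Matrix.updateRow_ne hw]
    simp [pushMat, hN, Matrix.mul_apply, h3]
  · intro i hi j hj
    have : i = b := not_not.1 hi
    subst this
    rw [Matrix.updateRow_self, Pi.single_eq_of_ne hj]

end Contract

/-! ### The forest expansion -/

namespace Multigraph

variable {V W E Fl : Type}

theorem eps_eq [DecidableEq V] (G : Multigraph V E) (e : E) :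
    G.eps e = Pi.single (G.ends e).1 1 - Pi.single (G.ends e).2 1 := by
  ext v
  simp [eps, Pi.single_apply, eq_comm]

theorem eps_mapV [Fintype V] [Fintype W] [DecidableEq V] [DecidableEq W] (G : Multigraph V E)
    (π : V → W) (e : E) : G.eps e ᵥ* fibMat π = (G.mapV π).eps e := by
  rw [eps_eq, eps_eq, Matrix.sub_vecMul, Matrix.single_one_vecMul, Matrix.single_one_vecMul]
  ext w
  simp [fibMat, mapV, Pi.single_apply, eq_comm]

/-- All-minors matrix–forest theorem, in quotient form: for an arbitrary matrix `B` on the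
vertices, adding a weighted graph Laplacian expands the determinant over spanning forests, each
contributing the determinant of `B` summed over its components. -/
theorem det_add_laplacian [DecidableEq E] (x : E → ℝ) (S : Finset E) :
    ∀ {V : Type} [Fintype V] [DecidableEq V] (G : Multigraph V E) (B : Matrix V V ℝ),
      (B + ∑ e ∈ S, x e • vecMulVec (G.eps e) (G.eps e)).det
        = ∑ F ∈ S.powerset, if G.IsForest F then
            (∏ e ∈ F, x e) * (pushMat (Quotient.mk (G.compSetoid F)) B).det else 0 := by
  induction S using Finset.induction_on with
  | empty =>
    intro V _ _ G B
    have hF : G.IsForest ∅ := fun e he => by simp at he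
    have hid : pushMat id B = B := by
      have : fibMat (id : V → V) = 1 := by ext v w; simp [fibMat, Matrix.one_apply]
      simp [pushMat, this]
    have hr : ∀ v w, G.Reach ∅ v w → v = w := by
      intro v w h
      induction h with
      | rel x y h => obtain ⟨_, h, _⟩ := h; simp at h
      | refl => rfl
      | symm _ _ _ ih => exact ih.symm
      | trans _ _ _ _ _ ih ih' => exact ih.trans ih'
    have := det_pushMat_congr (f := id) (g := Quotient.mk (G.compSetoid ∅))
      Function.surjective_id Quotient.mk_surjective
      (fun a b => ⟨fun h => by rw [show a = b from h], fun h => hr _ _ (Quotient.exact h)⟩) B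
    simp [hF, ← this, hid]
  | insert e S he ih =>
    intro V _ _ G B
    rw [Finset.sum_insert he, Finset.sum_powerset_insert he, add_left_comm, add_comm, ← ih]
    by_cases hl : (G.ends e).1 = (G.ends e).2
    · have h0 : G.eps e = 0 := by rw [eps_eq, hl, sub_self]
      simp [h0, G.not_isForest_insert_of_loop hl]
    · rw [G.eps_eq e, det_add_edge hl]
      congr 1
      set π := mergeMap hl with hπdef
      have hπ : π.Surjective := mergeMap_surjective hl
      have hπe : π (G.ends e).1 = π (G.ends e).2 := mergeMap_ends hl
      have hker : ∀ v w, π v = π w → G.Reach {e} v w := by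
        intro v w h
        have hr := G.reach_of_mem (Finset.mem_singleton_self e)
        rcases mergeMap_eq hl h with rfl | ⟨rfl, rfl⟩ | ⟨rfl, rfl⟩
        · exact Relation.EqvGen.refl _
        · exact hr
        · exact hr.symm
      have hpush : pushMat π (B + ∑ e ∈ S, x e • vecMulVec (G.eps e) (G.eps e))
          = pushMat π B + ∑ e ∈ S, x e • vecMulVec ((G.mapV π).eps e) ((G.mapV π).eps e) := by
        simp only [pushMat_add, pushMat_sum, pushMat_smul, pushMat_vecMulVec, eps_mapV]
      rw [hpush, ih, Finset.mul_sum]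
      refine Finset.sum_congr rfl fun F hF => ?_
      have heF : e ∉ F := fun h => he (Finset.mem_powerset.1 hF h)
      simp only [G.isForest_mapV hπ hπe hker hl heF, mul_ite, mul_zero]
      refine if_congr Iff.rfl ?_ rfl
      rw [Finset.prod_insert heF, pushMat_pushMat, mul_assoc]
      congr 2
      refine det_pushMat_congr (Quotient.mk_surjective.comp hπ) Quotient.mk_surjective ?_ B
      intro a b
      rw [Function.comp, Function.comp, Quotient.eq, Quotient.eq]
      exact G.reach_mapV hπ hπe hker F a b

theorem HMat_eq [DecidableEq V] [Fintype E] (G : Multigraph V E) (α : E → ℝ) (q : V → ℝ) :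
    G.HMat α q = diagonal q + ∑ e : E, (1 / α e) • vecMulVec (G.eps e) (G.eps e) := by
  ext v w
  simp [HMat, Matrix.sum_apply, Matrix.diagonal_apply, vecMulVec_apply, add_comm, mul_assoc]

/-- The scalar identity underlying the theorem: one momentum coordinate `u`. It is the difference
of the forest expansions for the potentials `diag q + u uᵀ` and `diag q`. -/
theorem adjugate_HMat_quadratic [Fintype V] [Fintype E] [DecidableEq V] [DecidableEq E]
    (G : Multigraph V E) (α : E → ℝ) (q u : V → ℝ) :
    u ⬝ᵥ ((G.HMat α q).adjugate *ᵥ u)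
      = ∑ F : Finset E, if G.IsForest F then (∏ e ∈ F, 1 / α e) *
          ∑ c : Quotient (G.compSetoid F),
            (∑ v ∈ univ.filter (fun v => Quotient.mk (G.compSetoid F) v = c), u v) ^ 2 *
              ∏ c' ∈ univ.erase c, G.qComp F q c' else 0 := by
  have h1 := det_add_vecMulVec_adjugate (G.HMat α q) u u
  rw [HMat_eq, add_right_comm, det_add_laplacian, det_add_laplacian, ← sub_eq_iff_eq_add',
    ← Finset.sum_sub_distrib, ← HMat_eq, Finset.powerset_univ] at h1
  rw [← h1]
  refine Finset.sum_congr rfl fun F _ => ?_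
  split_ifs with hF
  · rw [pushMat_add, pushMat_vecMulVec, det_add_vecMulVec_adjugate, mul_add, add_sub_cancel_left,
      pushMat_diagonal, Matrix.adjugate_diagonal]
    congr 1
    simp only [Matrix.mulVec_diagonal, dotProduct]
    refine Finset.sum_congr rfl fun c _ => ?_
    simp only [vecMul_fibMat_apply, qComp]
    ring
  · simp

end Multigraph

/-! ### Flag momenta -/

theorem sum_flagP {V Fl : Type} {d : ℕ} [Fintype V] [Fintype Fl] (attach : Fl → V)
    (p : Fl → Fin d → ℝ) (P : V → Prop) [DecidablePred P] :
    ∑ v ∈ univ.filter P, flagP attach p v = ∑ f ∈ univ.filter (fun f => P (attach f)), p f := by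
  have h : ∀ v, flagP attach p v = ∑ f, if attach f = v then p f else 0 := fun v => by
    rw [flagP, Finset.sum_filter]
  simp only [h]
  rw [Finset.sum_comm, Finset.sum_filter (s := (univ : Finset Fl))]
  refine Finset.sum_congr rfl fun f _ => ?_
  simp [Finset.sum_ite_eq]

/-- the generalized second Symanzik polynomial in terms of the adjugate
of the discrete Schrödinger operator `H`:
`𝒱_G(α,q,p) = (Π_e α_e) Σ_{v,v'} (adj H)_{v,v'} p_v·p_{v'}`.
(The Schwinger parameters `α_e` are positive.) -/
theorem genV_eq_adjugate_HMat {V E Fl : Type} {d : ℕ}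
    [Fintype V] [Fintype E] [DecidableEq V] [DecidableEq E] [Fintype Fl]
    (G : Multigraph V E) (α : E → ℝ) (hα : ∀ e, 0 < α e) (q : V → ℝ)
    (attach : Fl → V) (p : Fl → Fin d → ℝ) :
    G.genV α q attach p
      = (∏ e : E, α e) *
          ∑ v : V, ∑ v' : V,
            (G.HMat α q).adjugate v v' * dotp (flagP attach p v) (flagP attach p v') := by
  have hα0 : ∀ e, α e ≠ 0 := fun e => (hα e).ne'
  have hR : ∑ v : V, ∑ v' : V,
      (G.HMat α q).adjugate v v' * dotp (flagP attach p v) (flagP attach p v')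
      = ∑ i : Fin d, (fun v => flagP attach p v i) ⬝ᵥ
          ((G.HMat α q).adjugate *ᵥ fun v => flagP attach p v i) := by
    simp only [dotp, Matrix.mulVec, dotProduct, Finset.mul_sum]
    rw [Finset.sum_comm (s := (univ : Finset (Fin d)))]
    refine Finset.sum_congr rfl fun v _ => ?_
    rw [Finset.sum_comm (s := (univ : Finset (Fin d)))]
    refine Finset.sum_congr rfl fun v' _ => Finset.sum_congr rfl fun i _ => ?_
    ring
  rw [hR]
  simp only [Multigraph.adjugate_HMat_quadratic]
  rw [Finset.sum_comm, Multigraph.genV, Finset.sum_filter, Finset.mul_sum]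
  refine Finset.sum_congr rfl fun F _ => ?_
  split_ifs with hF
  · have hprod : (∏ e ∈ univ \ F, α e) = (∏ e, α e) * ∏ e ∈ F, 1 / α e := by
      rw [← Finset.prod_sdiff (Finset.subset_univ F), mul_assoc, ← Finset.prod_mul_distrib]
      simp [hα0]
    rw [← Finset.mul_sum, ← mul_assoc, ← hprod, Finset.sum_comm]
    congr 1
    refine Finset.sum_congr rfl fun c _ => ?_
    rw [← Finset.sum_mul]
    congr 1
    refine Finset.sum_congr rfl fun i _ => ?_
    rw [sq, Multigraph.pComp,
      ← sum_flagP attach p fun v => Quotient.mk (G.compSetoid F) v = c, Finset.sum_apply]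
  · simp
end

section
/- Let G = (V,E) be a finite multigraph with flags, each flag i carrying a weight ω_i ∈ ℕ⁺, every vertex carrying at least one flag, and let a_I = Σ_{i∈I} ω_i for a set I of flags. Then the Noble–Welsh polynomial W_G(ξ,y) = Σ_{A⊆E} (y−1)^{|A|−r(A)} Π_{C component of (V,A)} ξ_{a_{I_C}} satisfies (y−1)^{|V|} · W_G(ξ,y) = 𝒲_G(β,q) evaluated at β_e = y−1 for every edge and q_I = (y−1)·ξ_{a_I} for every nonempty flag subset I. -/
/-!
The identity holds term by term in the subset expansion over `A ⊆ E`. Pulling the factor `y - 1`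
out of each component turns the term of `𝒲_G` into `(y - 1) ^ (|A| + k(A))` times the product of
the `ξ`'s, so what is needed is `|V| + n(A) = |A| + k(A)`. Since `n(A)` is a truncated difference of
natural numbers, this amounts to `|V| ≤ |A| + k(A)`: the empty edge set has `|V|` components,
and adding an edge lowers the number of components by at most one.
-/

open Finset

attribute [local instance] Classical.propDecidable

namespace Multigraph
/-- The categorified multivariate polynomial `𝒲_G(β, q)`: flags are attached to
vertices via `attach`, and `q` has one variable for each (nonempty) set of flags. -/
noncomputable def catW (G : Multigraph V E) [Fintype V] [Fintype E] [Fintype Fl]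
    (attach : Fl → V) (β : E → ℝ) (q : Finset Fl → ℝ) : ℝ :=
  ∑ A : Finset E, (∏ e ∈ A, β e) *
    ∏ c : Quotient (G.compSetoid A),
      q (Finset.univ.filter (fun f => Quotient.mk (G.compSetoid A) (attach f) = c))
end Multigraph

namespace Multigraph
/-- The Noble–Welsh polynomial `W_G(ξ, y)` of a graph with flag weights `ω`. -/
noncomputable def nobleW (G : Multigraph V E) [Fintype V] [Fintype E] [Fintype Fl]
    (attach : Fl → V) (ω : Fl → ℕ) (ξ : ℕ → ℝ) (y : ℝ) : ℝ :=
  ∑ A : Finset E, (y - 1) ^ G.nullity A *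
    ∏ c : Quotient (G.compSetoid A),
      ξ (∑ f ∈ Finset.univ.filter (fun f => Quotient.mk (G.compSetoid A) (attach f) = c), ω f)
end Multigraph

namespace Multigraph

/-- Adding an edge `e = uv` merges at most two components. Redirecting the component of `v` to that
of `u` gives a map on vertices that is constant on the components of `(V, insert e A)`; the induced
map from these to the components of `(V, A)` misses at most the component of `v`. -/
theorem k_le_k_insert_add_one {V E : Type} [Finite V] [DecidableEq E] (G : Multigraph V E)
    (A : Finset E) (e : E) : G.k A ≤ G.k (insert e A) + 1 := by
  let m : V → Quotient (G.compSetoid A) := Quotient.mk _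
  obtain ⟨u, v, he⟩ : ∃ u v, G.ends e = (u, v) := ⟨_, _, rfl⟩
  let f : V → Quotient (G.compSetoid A) := fun x => if m x = m v then m u else m x
  have hedge : ∀ x y, G.edgeRel (insert e A) x y → f x = f y := by
    rintro x y ⟨e', he', h⟩
    rcases Finset.mem_insert.1 he' with rfl | hA
    · rw [he] at h
      rcases h with h | h <;> obtain ⟨rfl, rfl⟩ := Prod.mk.inj h <;> simp [f]
    · have hm : m x = m y := Quotient.sound (Relation.EqvGen.rel _ _ ⟨e', hA, h⟩)
      simp [f, hm]
  have hf : ∀ x y, Relation.EqvGen (G.edgeRel (insert e A)) x y → f x = f y := by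
    intro x y h
    induction h with
    | rel x y h => exact hedge x y h
    | refl x => rfl
    | symm x y _ ih => exact ih.symm
    | trans x y z _ _ ih₁ ih₂ => exact ih₁.trans ih₂
  let g : Option (Quotient (G.compSetoid (insert e A))) → Quotient (G.compSetoid A) :=
    fun o => o.elim (m v) (Quotient.lift f hf)
  have hg : Function.Surjective g := by
    intro c
    induction c using Quotient.inductionOn with
    | h x =>
      by_cases hx : m x = m v
      · exact ⟨none, hx.symm⟩
      · exact ⟨some (Quotient.mk _ x), if_neg hx⟩
  have h := Nat.card_le_card_of_surjective g hg
  rwa [Finite.card_option] at h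

/-- The rank of `(V, A)` is at most `|A|`, stated without subtraction. -/
theorem card_le_card_add_k {V E : Type} [Finite V] [DecidableEq E] (G : Multigraph V E)
    (A : Finset E) : Nat.card V ≤ A.card + G.k A := by
  induction A using Finset.induction_on with
  | empty =>
    have hinj : Function.Injective (Quotient.mk (G.compSetoid ∅)) := by
      intro x y hxy
      have h : Relation.EqvGen (G.edgeRel ∅) x y := Quotient.exact hxy
      induction h with
      | rel x y h =>
        obtain ⟨e, he, -⟩ := h
        exact absurd he (Finset.notMem_empty e)
      | refl x => rfl
      | symm x y _ ih => exact (ih hxy.symm).symm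
      | trans x y z h₁ h₂ ih₁ ih₂ =>
        exact (ih₁ (Quotient.sound h₁)).trans (ih₂ (Quotient.sound h₂))
    simpa [k] using Nat.card_le_card_of_injective _ hinj
  | insert e A he ih =>
    have := G.k_le_k_insert_add_one A e
    rw [Finset.card_insert_of_notMem he]
    omega

end Multigraph

/-- the Noble–Welsh polynomial is a specialization of the categorified
polynomial: `(y-1)^{|V|} W_G(ξ, y) = 𝒲_G(β, q)` at `β_e = y - 1` and
`q_I = (y-1) ξ_{a_I}` with `a_I = Σ_{i ∈ I} ω_i`. -/
theorem nobleWelsh_eq_catW {V E Fl : Type}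
    [Fintype V] [Fintype E] [DecidableEq E] [Fintype Fl]
    (G : Multigraph V E) (attach : Fl → V) (hfl : ∀ v : V, ∃ f : Fl, attach f = v)
    (ω : Fl → ℕ) (hω : ∀ f, 0 < ω f) (ξ : ℕ → ℝ) (y : ℝ) :
    (y - 1) ^ Nat.card V * G.nobleW attach ω ξ y
      = G.catW attach (fun _ => y - 1) (fun I => (y - 1) * ξ (∑ f ∈ I, ω f)) := by
  unfold Multigraph.nobleW Multigraph.catW
  rw [Finset.mul_sum]
  refine Finset.sum_congr rfl fun A _ => ?_
  have hexp : Nat.card V + G.nullity A = A.card + G.k A := by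
    have := G.card_le_card_add_k A
    unfold Multigraph.nullity
    omega
  rw [Finset.prod_mul_distrib, Finset.prod_const, Finset.prod_const, Finset.card_univ,
    ← Nat.card_eq_fintype_card, ← mul_assoc, ← mul_assoc, ← pow_add, ← pow_add, hexp]
  rfl
end
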